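/- Let L be a Lie algebra over k and let L' be a Lie subalgebra of L. If the universal enveloping algebra U(L) is noetherian (left and right), then U(L') is also noetherian (left and right). -/

import Mathlib

universe u

/-- A vector space complement of a Lie subalgebra `L'` of `L`, with a basis `x` indexed by `X`. -/
structure LieSubalgebra.BasedComplement {k L : Type*} [Field k] [LieRing L] [LieAlgebra k L]
    (L' : LieSubalgebra k L) (X : Type*) where
  x : X → L
  coord : L →ₗ[k] X →₀ k
  proj : L →ₗ[k] L'
  coord_x (i : X) : coord (x i) = Finsupp.single i 1
  proj_x (i : X) : proj (x i) = 0
  coord_coe (y : L') : coord y = 0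
  proj_coe (y : L') : proj y = y
  decomp (y : L) : (proj y : L) + Finsupp.linearCombination k x (coord y) = y

namespace LieSubalgebra.BasedComplement

variable {k L X M : Type*} [Field k] [LieRing L] [LieAlgebra k L] {L' : LieSubalgebra k L}

theorem induction (C : L'.BasedComplement X) {p : L → Prop} (coe : ∀ y : L', p y)
    (x : ∀ i, p (C.x i)) (add : ∀ y z, p y → p z → p (y + z))
    (smul : ∀ (a : k) y, p y → p (a • y)) (y : L) : p y := by
  rw [← C.decomp y]
  refine add _ _ (coe _) ?_
  generalize C.coord y = f
  induction f using Finsupp.induction_linear with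
  | zero => simpa using coe 0
  | add f g hf hg => simpa using add _ _ hf hg
  | single i a => simpa using smul a _ (x i)

theorem induction₂ (C : L'.BasedComplement X) {p : L → L → Prop} (symm : ∀ y z, p y z → p z y)
    (coe : ∀ y z : L', p y z) (x : ∀ y i, p y (C.x i))
    (add : ∀ y z w, p y w → p z w → p (y + z) w) (smul : ∀ (a : k) y z, p y z → p (a • y) z)
    (y z : L) : p y z := by
  induction y using C.induction with
  | coe y =>
    apply symm
    induction z using C.induction with
    | coe z => exact coe z y
    | x i => exact symm _ _ (x y i)
    | add z w hz hw => exact add _ _ _ hz hw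
    | smul a z hz => exact smul _ _ _ hz
  | x i => exact symm _ _ (x z i)
  | add z w hz hw => exact add _ _ _ hz hw
  | smul a z hz => exact smul _ _ _ hz

variable (C : L'.BasedComplement X) [AddCommGroup M] [Module k M]

/-- The map `(y, m) ↦ x_j • (y • (l ⊗ m)) + ⁅y, x_j⁆ • (l ⊗ m)`, where `•` is given by `R`. -/
noncomputable def swap (R : L →ₗ[k] Module.End k (List X →₀ M)) (j : X) (l : List X) :
    L →ₗ[k] M →ₗ[k] (List X →₀ M) where
  toFun y := R (C.x j) ∘ₗ R y ∘ₗ Finsupp.lsingle l + R ⁅y, C.x j⁆ ∘ₗ Finsupp.lsingle l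
  map_add' y z := by
    ext1 m; simp; abel
  map_smul' a y := by
    ext1 m; simp

@[simp]
theorem swap_apply (R : L →ₗ[k] Module.End k (List X →₀ M)) (j : X) (l : List X) (y : L) (m : M) :
    C.swap R j l y m =
      R (C.x j) (R y (Finsupp.single l m)) + R ⁅y, C.x j⁆ (Finsupp.single l m) := rfl

variable [LinearOrder X] (φ : L' →ₗ[k] Module.End k M)

/-- The action of `L` on `l ⊗ m`, given an approximation `R` of the action on shorter words. -/
noncomputable def stepWord (R : L →ₗ[k] Module.End k (List X →₀ M)) :
    List X → L →ₗ[k] M →ₗ[k] (List X →₀ M)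
  | [] => Finsupp.linearCombination k (fun i ↦ Finsupp.lsingle [i]) ∘ₗ C.coord +
      LinearMap.compRight k (Finsupp.lsingle []) ∘ₗ φ ∘ₗ C.proj
  | j :: l =>
      Finsupp.linearCombination k
        (fun i ↦ if i ≤ j then Finsupp.lsingle (i :: j :: l) else C.swap R j l (C.x i)) ∘ₗ C.coord +
      C.swap R j l ∘ₗ (L'.incl : L' →ₗ[k] L) ∘ₗ C.proj

/-- Successive approximations of the action of `L` on the induced module. -/
noncomputable def approx : ℕ → L →ₗ[k] Module.End k (List X →₀ M)
  | 0 => (Finsupp.lsum k).toLinearMap ∘ₗ LinearMap.pi (C.stepWord φ 0)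
  | n + 1 => (Finsupp.lsum k).toLinearMap ∘ₗ LinearMap.pi (C.stepWord φ (approx n))

theorem approx_coe_nil (n : ℕ) (y : L') (m : M) :
    C.approx φ n y (Finsupp.single [] m) = Finsupp.single [] (φ y m) := by
  cases n <;> simp [approx, stepWord, coord_coe, proj_coe]

theorem approx_x_le (n : ℕ) (i : X) (l : List X) (m : M) (h : ∀ j ∈ l, i ≤ j) :
    C.approx φ n (C.x i) (Finsupp.single l m) = Finsupp.single (i :: l) m := by
  cases l <;> cases n <;> simp_all [approx, stepWord, coord_x, proj_x]

theorem approx_coe_cons (n : ℕ) (y : L') (j : X) (l : List X) (m : M) :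
    C.approx φ (n + 1) y (Finsupp.single (j :: l) m) = C.swap (C.approx φ n) j l y m := by
  simp [approx, stepWord, coord_coe, proj_coe]

theorem approx_x_cons (n : ℕ) (i j : X) (h : ¬ i ≤ j) (l : List X) (m : M) :
    C.approx φ (n + 1) (C.x i) (Finsupp.single (j :: l) m) =
      C.swap (C.approx φ n) j l (C.x i) m := by
  simp [approx, stepWord, coord_x, proj_x, h]

variable (k X M) in
/-- The span of the `l ⊗ m` with `l` a sorted word of length at most `n`. -/
noncomputable def sortedLE (n : ℕ∞) : Submodule k (List X →₀ M) :=
  Submodule.span k {v | ∃ l m, l.Pairwise (· ≤ ·) ∧ (l.length : ℕ∞) ≤ n ∧ v = Finsupp.single l m}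

theorem single_mem_sortedLE {n : ℕ∞} {l : List X} (m : M) (h : l.Pairwise (· ≤ ·))
    (hn : (l.length : ℕ∞) ≤ n) : Finsupp.single l m ∈ sortedLE k X M n :=
  Submodule.subset_span ⟨l, m, h, hn, rfl⟩

theorem sortedLE_mono {a b : ℕ∞} (h : a ≤ b) : sortedLE k X M a ≤ sortedLE k X M b :=
  Submodule.span_mono fun _ ⟨l, m, h₁, h₂, h₃⟩ ↦ ⟨l, m, h₁, h₂.trans h, h₃⟩

theorem map_sortedLE_le {n : ℕ∞} {V : Type*} [AddCommGroup V] [Module k V]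
    (f : (List X →₀ M) →ₗ[k] V) (S : Submodule k V)
    (h : ∀ (l : List X) (m : M), l.Pairwise (· ≤ ·) → (l.length : ℕ∞) ≤ n →
      f (Finsupp.single l m) ∈ S) {v : List X →₀ M} (hv : v ∈ sortedLE k X M n) : f v ∈ S := by
  suffices sortedLE k X M n ≤ S.comap f from this hv
  refine Submodule.span_le.2 ?_
  rintro _ ⟨l, m, h₁, h₂, rfl⟩
  exact h l m h₁ h₂

/-- An operator-valued linear map on `L` behaves to leading order like multiplication in the
symmetric algebra of the complement on the word `l`. -/
def HasSymbol (R : L →ₗ[k] Module.End k (List X →₀ M)) (l : List X) (m : M) : Prop :=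
  (∀ y : L', R y (Finsupp.single l m) ∈ sortedLE k X M l.length) ∧
  ∀ i, R (C.x i) (Finsupp.single l m) - Finsupp.single (l.orderedInsert (· ≤ ·) i) m ∈
    sortedLE k X M l.length

variable {C} in
theorem HasSymbol.apply_mem {R : L →ₗ[k] Module.End k (List X →₀ M)} {l : List X} {m : M}
    (h : C.HasSymbol R l m) (hl : l.Pairwise (· ≤ ·)) (y : L) :
    R y (Finsupp.single l m) ∈ sortedLE k X M ((l.length + 1 : ℕ) : ℕ∞) := by
  have hle : sortedLE k X M l.length ≤ sortedLE k X M ((l.length + 1 : ℕ) : ℕ∞) :=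
    sortedLE_mono (by exact_mod_cast Nat.le_succ _)
  induction y using C.induction with
  | coe y => exact hle (h.1 y)
  | x i =>
    rw [← sub_add_cancel (R (C.x i) (Finsupp.single l m))
      (Finsupp.single (l.orderedInsert (· ≤ ·) i) m)]
    refine add_mem (hle (h.2 i)) (single_mem_sortedLE _ (hl.orderedInsert i l) ?_)
    rw [List.orderedInsert_length]
  | add y z hy hz => simpa using add_mem hy hz
  | smul a y hy => simpa using Submodule.smul_mem _ a hy

theorem le_of_mem_orderedInsert {i j : X} (hij : j ≤ i) {l : List X} (hl : ∀ a ∈ l, j ≤ a) :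
    ∀ a ∈ l.orderedInsert (· ≤ ·) i, j ≤ a := by
  intro a ha
  rcases (List.mem_orderedInsert _).1 ha with rfl | ha
  exacts [hij, hl a ha]

theorem approx_hasSymbol (n : ℕ) : ∀ (l : List X) (m : M), l.Pairwise (· ≤ ·) → l.length ≤ n →
    C.HasSymbol (C.approx φ n) l m := by
  have nil (n : ℕ) (m : M) : C.HasSymbol (C.approx φ n) [] m :=
    ⟨fun y ↦ by simpa [approx_coe_nil] using single_mem_sortedLE (l := []) _ (by simp) (by simp),
      fun i ↦ by simp [approx_x_le]⟩
  induction n with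
  | zero =>
    intro l m hl hn
    obtain rfl : l = [] := List.length_eq_zero_iff.1 (by lia)
    exact nil 0 m
  | succ n ih =>
    rintro (_ | ⟨j, l⟩) m hl hn
    · exact nil _ m
    rw [List.pairwise_cons] at hl
    obtain ⟨hj, hl⟩ := hl
    have hn : l.length ≤ n := by simpa using hn
    have mem (y : L) {v : List X →₀ M} (hv : v ∈ sortedLE k X M l.length) :
        C.approx φ n y v ∈ sortedLE k X M (j :: l).length :=
      map_sortedLE_le _ _ (fun l' m' h₁ h₂ ↦ by
        have h₂ : l'.length ≤ l.length := by exact_mod_cast h₂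
        refine sortedLE_mono ?_ ((ih l' m' h₁ (h₂.trans hn)).apply_mem h₁ y)
        simpa using h₂) hv
    refine ⟨fun y ↦ ?_, fun i ↦ ?_⟩
    · rw [approx_coe_cons, swap_apply]
      exact add_mem (mem _ ((ih l m hl hn).1 y)) (mem _ (single_mem_sortedLE _ hl le_rfl))
    · by_cases hij : i ≤ j
      · rw [approx_x_le _ _ _ _ _ _ (by simpa using ⟨hij, fun a ha ↦ hij.trans (hj a ha)⟩)]
        simp [hij]
      · rw [approx_x_cons _ _ _ _ _ hij, swap_apply]
        have key := mem (C.x j) ((ih l m hl hn).2 i)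
        rw [map_sub, approx_x_le _ _ _ _ _ _ (le_of_mem_orderedInsert (not_le.1 hij).le hj)] at key
        rw [List.orderedInsert_cons, if_neg hij, add_sub_right_comm]
        exact add_mem key (mem _ (single_mem_sortedLE _ hl le_rfl))

theorem approx_succ (n : ℕ) (y : L) : ∀ (l : List X) (m : M), l.Pairwise (· ≤ ·) →
    l.length ≤ n →
    C.approx φ (n + 1) y (Finsupp.single l m) = C.approx φ n y (Finsupp.single l m) := by
  induction n generalizing y with
  | zero =>
    intro l m hl hn
    obtain rfl : l = [] := List.length_eq_zero_iff.1 (by lia)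
    simp [approx, stepWord]
  | succ n ih =>
    rintro (_ | ⟨j, l⟩) m hl hn
    · simp [approx, stepWord]
    rw [List.pairwise_cons] at hl
    obtain ⟨hj, hl⟩ := hl
    have hn : l.length ≤ n := by simpa using hn
    have eq (y : L) {v : List X →₀ M} (hv : v ∈ sortedLE k X M l.length) :
        C.approx φ (n + 1) y v = C.approx φ n y v := by
      rw [← sub_eq_zero, ← LinearMap.sub_apply, ← Submodule.mem_bot k]
      refine map_sortedLE_le _ _ (fun l' m' h₁ h₂ ↦ ?_) hv
      have h₂ : l'.length ≤ l.length := by exact_mod_cast h₂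
      simp [ih y l' m' h₁ (h₂.trans hn)]
    have sym := C.approx_hasSymbol φ n l m hl hn
    induction y using C.induction with
    | coe y =>
      simp only [approx_coe_cons, swap_apply]
      rw [ih _ l m hl hn, ih _ l m hl hn, eq _ (sym.1 y)]
    | x i =>
      by_cases hij : i ≤ j
      · have : ∀ a ∈ j :: l, i ≤ a := by simpa using ⟨hij, fun a ha ↦ hij.trans (hj a ha)⟩
        rw [approx_x_le _ _ _ _ _ _ this, approx_x_le _ _ _ _ _ _ this]
      · simp only [approx_x_cons _ _ _ _ _ hij, swap_apply]
        rw [ih _ l m hl hn, ih _ l m hl hn]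
        congr 1
        have h := eq (C.x j) (sym.2 i)
        have hle := le_of_mem_orderedInsert (not_le.1 hij).le hj
        simpa [approx_x_le _ _ _ _ _ _ hle] using h
    | add y z hy hz => simp [hy, hz]
    | smul a y hy => simp [hy]

/-- The action of `L` on the induced module, meaningful on sorted words. -/
noncomputable def act : L →ₗ[k] Module.End k (List X →₀ M) :=
  (Finsupp.lsum k).toLinearMap ∘ₗ LinearMap.pi fun l ↦
    LinearMap.lcomp k _ (Finsupp.lsingle l) ∘ₗ C.approx φ l.length

theorem act_single (y : L) (l : List X) (m : M) :
    C.act φ y (Finsupp.single l m) = C.approx φ l.length y (Finsupp.single l m) := by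
  simp [act]

theorem act_eq_approx (n : ℕ) (y : L) {v : List X →₀ M} (hv : v ∈ sortedLE k X M n) :
    C.act φ y v = C.approx φ n y v := by
  rw [← sub_eq_zero, ← LinearMap.sub_apply, ← Submodule.mem_bot k]
  refine map_sortedLE_le _ _ (fun l m h₁ h₂ ↦ ?_) hv
  have h₂ : l.length ≤ n := by exact_mod_cast h₂
  rw [LinearMap.sub_apply, act_single, Submodule.mem_bot, sub_eq_zero]
  clear hv ‹(l.length : ℕ∞) ≤ n›
  induction n, h₂ using Nat.le_induction with
  | base => rfl
  | succ n h₂ ih => rw [approx_succ _ _ _ _ _ _ h₁ h₂, ih]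

theorem act_coe_nil (y : L') (m : M) :
    C.act φ y (Finsupp.single [] m) = Finsupp.single [] (φ y m) := by
  rw [act_single, approx_coe_nil]

theorem act_x_le (i : X) (l : List X) (m : M) (h : ∀ j ∈ l, i ≤ j) :
    C.act φ (C.x i) (Finsupp.single l m) = Finsupp.single (i :: l) m := by
  rw [act_single, approx_x_le _ _ _ _ _ _ h]

theorem act_hasSymbol (l : List X) (m : M) (hl : l.Pairwise (· ≤ ·)) :
    C.HasSymbol (C.act φ) l m := by
  have := C.approx_hasSymbol φ l.length l m hl le_rfl
  simpa only [HasSymbol, act_single] using this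

theorem act_coe_cons (y : L') (j : X) (l : List X) (m : M) (hl : (j :: l).Pairwise (· ≤ ·)) :
    C.act φ y (Finsupp.single (j :: l) m) = C.swap (C.act φ) j l y m := by
  have hl := (List.pairwise_cons.1 hl).2
  rw [act_single, List.length_cons, approx_coe_cons, swap_apply, swap_apply, act_single, act_single,
    act_eq_approx]
  exact (C.approx_hasSymbol φ l.length l m hl le_rfl).1 y

theorem act_x_cons (i j : X) (h : ¬ i ≤ j) (l : List X) (m : M)
    (hl : (j :: l).Pairwise (· ≤ ·)) :
    C.act φ (C.x i) (Finsupp.single (j :: l) m) = C.swap (C.act φ) j l (C.x i) m := by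
  obtain ⟨hj, hl⟩ := List.pairwise_cons.1 hl
  rw [act_single, List.length_cons, approx_x_cons _ _ _ _ _ h, swap_apply, swap_apply, act_single,
    act_single]
  congr 1
  have key := C.act_eq_approx φ l.length (C.x j)
    ((C.approx_hasSymbol φ l.length l m hl le_rfl).2 i)
  have hle := le_of_mem_orderedInsert (not_le.1 h).le hj
  simpa [approx_x_le _ _ _ _ _ _ hle, act_x_le _ _ _ _ _ hle] using key.symm

/-- The failure of `act` to be compatible with the bracket of `y` and `z`. -/
noncomputable def defect (y z : L) : Module.End k (List X →₀ M) :=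
  C.act φ y * C.act φ z - C.act φ z * C.act φ y - C.act φ ⁅y, z⁆

theorem defect_self (y : L) : C.defect φ y y = 0 := by
  simp [defect]

theorem defect_swap (y z : L) : C.defect φ z y = - C.defect φ y z := by
  rw [defect, defect, ← lie_skew y z, map_neg]
  abel

theorem defect_add (y z w : L) : C.defect φ (y + z) w = C.defect φ y w + C.defect φ z w := by
  simp only [defect, add_lie, map_add, add_mul, mul_add]
  abel

theorem defect_smul (a : k) (y z : L) : C.defect φ (a • y) z = a • C.defect φ y z := by
  simp only [defect, smul_lie, map_smul, smul_mul_assoc, mul_smul_comm, smul_sub]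

theorem defect_apply_eq_zero_iff {y z : L} {v : List X →₀ M} :
    C.defect φ y z v = 0 ↔
      C.act φ y (C.act φ z v) = C.act φ z (C.act φ y v) + C.act φ ⁅y, z⁆ v := by
  simp [defect, sub_sub, sub_eq_zero]

theorem defect_x_of_le (y : L) {j : X} {l : List X} (hl : (j :: l).Pairwise (· ≤ ·)) (m : M) :
    C.defect φ y (C.x j) (Finsupp.single l m) = 0 := by
  obtain ⟨hj, hl'⟩ := List.pairwise_cons.1 hl
  have gt {i j : X} (h : ¬ i ≤ j) (hl : (j :: l).Pairwise (· ≤ ·)) :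
      C.defect φ (C.x i) (C.x j) (Finsupp.single l m) = 0 := by
    rw [defect_apply_eq_zero_iff, act_x_le _ _ j l m (List.pairwise_cons.1 hl).1,
      act_x_cons _ _ _ _ h _ _ hl, swap_apply]
  induction y using C.induction with
  | coe y =>
    rw [defect_apply_eq_zero_iff, act_x_le _ _ j l m hj, act_coe_cons _ _ _ _ _ _ hl, swap_apply]
  | x i =>
    rcases lt_trichotomy i j with h | rfl | h
    · rw [defect_swap, LinearMap.neg_apply, gt h.not_ge, neg_zero]
      exact List.pairwise_cons.2 ⟨fun a ha ↦ h.le.trans (hj a ha), hl'⟩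
    · simp [defect_self]
    · exact gt h.not_ge hl
  | add y z hy hz => simp [defect_add, hy, hz]
  | smul a y hy => simp [defect_smul, hy]

variable {φ}

theorem defect_nil (hφ : ∀ y z, φ ⁅y, z⁆ = φ y * φ z - φ z * φ y) (y z : L) (m : M) :
    C.defect φ y z (Finsupp.single [] m) = 0 := by
  induction y, z using C.induction₂ with
  | symm y z h => rw [defect_swap, LinearMap.neg_apply, h, neg_zero]
  | coe y z =>
    rw [defect_apply_eq_zero_iff, ← LieSubalgebra.coe_bracket]
    simp only [act_coe_nil, hφ, ← Finsupp.single_add]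
    simp
  | x y i => exact C.defect_x_of_le φ y (by simp) m
  | add y z w hy hz => simp [defect_add, hy, hz]
  | smul a y z hy => simp [defect_smul, hy]

/-- The commutation relation for `y`, `z` on `j :: l` follows from relations on `l`. -/
theorem defect_cons (y z : L) {j : X} {l : List X} (hl : (j :: l).Pairwise (· ≤ ·)) (m : M)
    (ih : ∀ y z, C.defect φ y z (Finsupp.single l m) = 0)
    (hy : C.defect φ y (C.x j) (C.act φ z (Finsupp.single l m)) = 0)
    (hz : C.defect φ z (C.x j) (C.act φ y (Finsupp.single l m)) = 0) :
    C.defect φ y z (Finsupp.single (j :: l) m) = 0 := by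
  simp only [defect_apply_eq_zero_iff] at *
  rw [← C.act_x_le φ j l m (List.pairwise_cons.1 hl).1]
  have jac : ⁅⁅y, z⁆, C.x j⁆ = ⁅y, ⁅z, C.x j⁆⁆ - ⁅z, ⁅y, C.x j⁆⁆ := by
    rw [lie_lie]
  rw [ih z (C.x j), ih y (C.x j), ih ⁅y, z⁆ (C.x j), jac]
  simp only [map_add, map_sub, LinearMap.sub_apply]
  rw [hy, hz, ih y ⁅z, C.x j⁆, ih z ⁅y, C.x j⁆, ih y z, map_add]
  abel

theorem defect_sortedLE (hφ : ∀ y z, φ ⁅y, z⁆ = φ y * φ z - φ z * φ y) (n : ℕ) :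
    ∀ (y z : L) {v : List X →₀ M}, v ∈ sortedLE k X M n → C.defect φ y z v = 0 := by
  suffices ∀ (y z : L) (l : List X) (m : M), l.Pairwise (· ≤ ·) → l.length ≤ n →
      C.defect φ y z (Finsupp.single l m) = 0 by
    intro y z v hv
    rw [← Submodule.mem_bot k]
    exact map_sortedLE_le _ _ (fun l m h₁ h₂ ↦ this y z l m h₁ (by exact_mod_cast h₂)) hv
  induction n with
  | zero =>
    intro y z l m hl hn
    obtain rfl : l = [] := List.length_eq_zero_iff.1 (by lia)
    exact C.defect_nil hφ y z m
  | succ n ih =>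
    rintro y z (_ | ⟨j, l⟩) m hl hn
    · exact C.defect_nil hφ y z m
    obtain ⟨hj, hl'⟩ := List.pairwise_cons.1 hl
    have hn : l.length ≤ n := by simpa using hn
    have low (y z : L) {v : List X →₀ M} (hv : v ∈ sortedLE k X M l.length) :
        C.defect φ y z v = 0 := by
      rw [← Submodule.mem_bot k]
      refine map_sortedLE_le _ _ (fun l' m' h₁ h₂ ↦ ih y z l' m' h₁ ?_) hv
      exact le_trans (by exact_mod_cast h₂) hn
    have sym := C.act_hasSymbol φ l m hl'
    have coe (y : L) (z : L') : C.defect φ y (C.x j) (C.act φ z (Finsupp.single l m)) = 0 :=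
      low _ _ (sym.1 z)
    have gt (y : L) {i : X} (h : j ≤ i) :
        C.defect φ y (C.x j) (C.act φ (C.x i) (Finsupp.single l m)) = 0 := by
      rw [← sub_add_cancel (C.act φ (C.x i) (Finsupp.single l m))
        (Finsupp.single (l.orderedInsert (· ≤ ·) i) m), map_add, low _ _ (sym.2 i), zero_add]
      exact C.defect_x_of_le φ y
        (List.pairwise_cons.2 ⟨le_of_mem_orderedInsert h hj, hl'.orderedInsert i l⟩) m
    have rel (y z : L) := C.defect_cons y z hl m (fun y z ↦ ih y z l m hl' hn)
    have lt (y : L) {i : X} (h : i ≤ j) :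
        C.defect φ y (C.x i) (Finsupp.single (j :: l) m) = 0 :=
      C.defect_x_of_le φ y (List.pairwise_cons.2
        ⟨by simpa using ⟨h, fun a ha ↦ h.trans (hj a ha)⟩, hl⟩) m
    induction y, z using C.induction₂ with
    | symm y z h => rw [defect_swap, LinearMap.neg_apply, h, neg_zero]
    | coe y z => exact rel _ _ (coe _ _) (coe _ _)
    | x y i =>
      rcases le_total i j with h | h
      · exact lt y h
      induction y using C.induction with
      | coe y => exact rel _ _ (gt _ h) (coe _ _)
      | x i' =>
        rcases le_total i' j with h' | h'
        · rw [defect_swap, LinearMap.neg_apply, lt _ h', neg_zero]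
        · exact rel _ _ (gt _ h) (gt _ h')
      | add y z hy hz => simp [defect_add, hy, hz]
      | smul a y hy => simp [defect_smul, hy]
    | add y z w hy hz => simp [defect_add, hy, hz]
    | smul a y z hy => simp [defect_smul, hy]

variable (φ) in
theorem act_mem_sortedLE_top (y : L) {v : List X →₀ M} (hv : v ∈ sortedLE k X M ⊤) :
    C.act φ y v ∈ sortedLE k X M ⊤ :=
  map_sortedLE_le _ _ (fun l m h _ ↦
    sortedLE_mono le_top ((C.act_hasSymbol φ l m h).apply_mem h y)) hv

theorem defect_sortedLE_top (hφ : ∀ y z, φ ⁅y, z⁆ = φ y * φ z - φ z * φ y) (y z : L)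
    {v : List X →₀ M} (hv : v ∈ sortedLE k X M ⊤) : C.defect φ y z v = 0 := by
  rw [← Submodule.mem_bot k]
  exact map_sortedLE_le _ _ (fun l m h _ ↦
    C.defect_sortedLE hφ l.length y z (single_mem_sortedLE m h le_rfl)) hv

end LieSubalgebra.BasedComplement

section

attribute [local instance] LieRing.ofAssociativeRing

theorem LieSubalgebra.exists_basedComplement {k : Type*} {L : Type u} [Field k] [LieRing L]
    [LieAlgebra k L] (L' : LieSubalgebra k L) :
    ∃ X : Type u, Nonempty (L'.BasedComplement X) := by
  obtain ⟨Q, hQ⟩ := L'.toSubmodule.exists_isCompl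
  let b := Module.Basis.ofVectorSpace k Q
  refine ⟨_, ⟨{
    x i := b i
    coord := b.repr.toLinearMap ∘ₗ Q.projectionOnto _ hQ.symm
    proj := L'.toSubmodule.projectionOnto _ hQ
    coord_x i := ?_
    proj_x i := ?_
    coord_coe y := ?_
    proj_coe y := ?_
    decomp y := ?_ }⟩⟩
  · simp
  · exact Submodule.projectionOnto_apply_right hQ (b i)
  · exact (congrArg b.repr (Submodule.projectionOnto_apply_right hQ.symm y)).trans (map_zero _)
  · exact Submodule.projectionOnto_apply_left hQ y
  · have h := b.linearCombination_repr (Q.projectionOnto _ hQ.symm y)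
    replace h := congrArg Q.subtype h
    rw [Finsupp.apply_linearCombination] at h
    have := Submodule.projection_add_projection_eq_self hQ y
    exact (congrArg (_ + ·) h).trans this

/-- Every module over a Lie subalgebra embeds in a module over the whole Lie algebra. -/
theorem LieSubalgebra.exists_extension {k M : Type*} {L : Type u} [Field k] [LieRing L]
    [LieAlgebra k L] (L' : LieSubalgebra k L) [AddCommGroup M] [Module k M]
    (φ : L' →ₗ⁅k⁆ Module.End k M) :
    ∃ (X : Type u) (N : Submodule k (List X →₀ M)) (ψ : L →ₗ⁅k⁆ Module.End k N) (f : M →ₗ[k] N),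
      Function.Injective f ∧ ∀ (y : L') (m : M), ψ y (f m) = f (φ y m) := by
  obtain ⟨X, ⟨C⟩⟩ := L'.exists_basedComplement
  let : LinearOrder X := IsWellOrder.linearOrder WellOrderingRel
  have hφ (y z : L') : (φ : L' →ₗ[k] Module.End k M) ⁅y, z⁆ = φ y * φ z - φ z * φ y := by
    simp [LieRing.of_associative_ring_bracket]
  let N := BasedComplement.sortedLE k X M ⊤
  have hN (m : M) : Finsupp.single [] m ∈ N :=
    BasedComplement.single_mem_sortedLE m (by simp) le_top
  refine ⟨X, N,
    { toFun y := (C.act φ y).restrict fun v hv ↦ C.act_mem_sortedLE_top _ y hv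
      map_add' y z := by ext1 v; simp [Subtype.ext_iff]
      map_smul' a y := by ext1 v; simp [Subtype.ext_iff]
      map_lie' := ?_ },
    (Finsupp.lsingle []).codRestrict N hN, fun m m' h ↦ ?_, fun y m ↦ ?_⟩
  · intro y z
    ext1 v
    have := (C.defect_apply_eq_zero_iff _).1 (C.defect_sortedLE_top hφ y z v.2)
    simp [Subtype.ext_iff, LieRing.of_associative_ring_bracket, this]
  · exact Finsupp.single_injective _ (congrArg Subtype.val h)
  · exact Subtype.ext (C.act_coe_nil _ y m)

namespace UniversalEnvelopingAlgebra

variable {k L : Type*} [Field k] [LieRing L] [LieAlgebra k L]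

/-- The map of enveloping algebras induced by the inclusion of a Lie subalgebra. -/
noncomputable def mapIncl (L' : LieSubalgebra k L) :
    UniversalEnvelopingAlgebra k L' →ₐ[k] UniversalEnvelopingAlgebra k L :=
  lift k ((ι k).comp L'.incl)

theorem induction_on {p : UniversalEnvelopingAlgebra k L → Prop}
    (u : UniversalEnvelopingAlgebra k L) (algebraMap : ∀ a, p (algebraMap k _ a))
    (ι : ∀ x, p (ι k x)) (add : ∀ u v, p u → p v → p (u + v))
    (mul : ∀ u v, p u → p v → p (u * v)) : p u := by
  obtain ⟨t, rfl⟩ : ∃ t, mkAlgHom k L t = u := RingCon.mkₐ_surjective _ u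
  induction t using TensorAlgebra.induction with
  | algebraMap a => simpa using algebraMap a
  | ι x => exact ι x
  | mul s t hs ht => simpa using mul _ _ hs ht
  | add s t hs ht => simpa using add _ _ hs ht

/-- Left ideals of `U(L')` are contracted from `U(L)`. -/
theorem comap_map_mapIncl (L' : LieSubalgebra k L)
    (I : Ideal (UniversalEnvelopingAlgebra k L')) :
    (I.map (mapIncl L')).comap (mapIncl L') = I := by
  refine le_antisymm (fun u hu ↦ ?_) Ideal.le_comap_map
  let A := UniversalEnvelopingAlgebra k L'
  let act : A →ₐ[k] Module.End k (A ⧸ I) := Algebra.lsmul k k (A ⧸ I)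
  obtain ⟨X, N, ψ, f, hf, hψ⟩ := L'.exists_extension (act.toLieHom.comp (ι k))
  have key (a : A) (m : A ⧸ I) : lift k ψ (mapIncl L' a) (f m) = f (act a m) := by
    induction a using induction_on generalizing m with
    | algebraMap a => simp [Algebra.algebraMap_eq_smul_one]
    | ι x =>
      rw [mapIncl, lift_ι_apply]
      exact (congrArg (· (f m)) (lift_ι_apply k ψ x)).trans (hψ x m)
    | add a b ha hb => simp [ha, hb]
    | mul a b ha hb => simp [ha, hb]
  have act_one (a : A) : act a (Submodule.Quotient.mk 1) = Submodule.Quotient.mk a :=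
    congrArg Submodule.Quotient.mk (mul_one a)
  have ann {w : UniversalEnvelopingAlgebra k L} (hw : w ∈ I.map (mapIncl L')) :
      lift k ψ w (f (Submodule.Quotient.mk 1)) = 0 := by
    induction hw using Submodule.span_induction with
    | mem w hw =>
      obtain ⟨a, ha, rfl⟩ := hw
      rw [key, act_one, (Submodule.Quotient.mk_eq_zero I).2 ha, map_zero]
    | zero => simp
    | add v w _ _ hv hw => simp [hv, hw]
    | smul a w _ hw => simp [hw]
  have h := ann hu
  rw [key, map_eq_zero_iff f hf, act_one] at h
  exact (Submodule.Quotient.mk_eq_zero I).1 h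

/-- The antipode of the enveloping algebra, as a map to the opposite algebra. -/
noncomputable def antipode :
    UniversalEnvelopingAlgebra k L →ₐ[k] (UniversalEnvelopingAlgebra k L)ᵐᵒᵖ :=
  lift k
    { toFun x := MulOpposite.op (-ι k x)
      map_add' x y := by simp [add_comm]
      map_smul' a x := by simp
      map_lie' := by
        intro x y
        apply MulOpposite.unop_injective
        simp [LieRing.of_associative_ring_bracket] }

theorem isNoetherianRing_op_of_isNoetherianRing
    (h : IsNoetherianRing (UniversalEnvelopingAlgebra k L)) :
    IsNoetherianRing (UniversalEnvelopingAlgebra k L)ᵐᵒᵖ := by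
  refine isNoetherianRing_of_surjective _ _ (antipode (k := k) (L := L)).toRingHom ?_
  intro u
  induction u using MulOpposite.rec' with | _ u
  change ∃ v, antipode v = MulOpposite.op u
  induction u using induction_on with
  | algebraMap a => exact ⟨algebraMap k _ a, by simp⟩
  | ι x => exact ⟨-ι k x, by simp [antipode]⟩
  | add u v hu hv =>
    obtain ⟨⟨u', hu⟩, v', hv⟩ := And.intro hu hv
    exact ⟨u' + v', by simp [hu, hv]⟩
  | mul u v hu hv =>
    obtain ⟨⟨u', hu⟩, v', hv⟩ := And.intro hu hv
    exact ⟨v' * u', by simp [hu, hv]⟩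

theorem isNoetherianRing_of_lieSubalgebra (L' : LieSubalgebra k L)
    (h : IsNoetherianRing (UniversalEnvelopingAlgebra k L)) :
    IsNoetherianRing (UniversalEnvelopingAlgebra k L') := by
  have hmono : StrictMono fun I : Ideal (UniversalEnvelopingAlgebra k L') ↦ I.map (mapIncl L') :=
    Monotone.strictMono_of_injective (fun _ _ ↦ Ideal.map_mono)
      (Function.LeftInverse.injective (comap_map_mapIncl L'))
  exact isNoetherian_mk hmono.wellFoundedGT

end UniversalEnvelopingAlgebra

end

/-!
Statement 5: If `L'` is a Lie subalgebra of a Lie algebra `L` over a field `k` of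
characteristic 0 and `U(L)` is (left and right) noetherian, then `U(L')` is (left and right)
noetherian.  Right noetherianity of `A` is expressed as left noetherianity of `Aᵐᵒᵖ`.
-/

theorem enveloping_noetherian_of_lieSubalgebra (k : Type*) (L : Type*) [Field k] [CharZero k]
    [LieRing L] [LieAlgebra k L] (L' : LieSubalgebra k L)
    (hl : IsNoetherianRing (UniversalEnvelopingAlgebra k L))
    (hr : IsNoetherianRing (UniversalEnvelopingAlgebra k L)ᵐᵒᵖ) :
    IsNoetherianRing (UniversalEnvelopingAlgebra k L') ∧
      IsNoetherianRing (UniversalEnvelopingAlgebra k L')ᵐᵒᵖ := by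
  have h := UniversalEnvelopingAlgebra.isNoetherianRing_of_lieSubalgebra L' hl
  exact ⟨h, UniversalEnvelopingAlgebra.isNoetherianRing_op_of_isNoetherianRing h⟩
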